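/- arXiv:1805.08901 — 9 statements merged into one kernel-verified Lean document; each statement's English description precedes it below -/
import Mathlib

section
/- Let V be a finite set, G a simple graph on V, and let A, B be disjoint sets with A ∪ B = V. Let T ≥ 0 and c ≥ 0 be real numbers and y : V → {−1, 1}. Define the score of the partition (A,B) as score(A,B) = T·(e_G(A) + e_G(B)) + c·(|{i ∈ A : y(i) = 1}| + |{j ∈ B : y(j) = −1}|). Suppose there exist i ∈ A and j ∈ B such that T·(e_G(i,B) − e_G(i,A)) − c·y(i) ≥ T and T·(e_G(j,A) − e_G(j,B)) + c·y(j) ≥ T. Then, with Â = (A \ {i}) ∪ {j} and B̂ = (B \ {j}) ∪ {i}, one has score(Â, B̂) ≥ score(A, B). -/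
/-!
A swap is two single-vertex moves. Moving `i` out of `A` changes the score by
`T * (e(i, B) - e(i, A)) - c * y i`, and moving `j` out of `B` by
`T * (e(j, A) - e(j, B)) + c * y j`. Performed in succession, the two moves gain the sum of these
minus a correction `2 * T` that occurs only if `i` and `j` are adjacent. Each of the two gains is
at least `T`, which pays for the correction.
-/

open Finset

/-- Number of edges of `G` with both endpoints in `A`
(counted as ordered adjacent pairs, halved). -/
def edgesWithin {V : Type*} [DecidableEq V] (G : SimpleGraph V) [DecidableRel G.Adj]
    (A : Finset V) : ℕ :=
  ((A ×ˢ A).filter (fun p => G.Adj p.1 p.2)).card / 2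

/-- Number of edges of `G` between the vertex `v` and the vertices of `S`. -/
def edgesBetween {V : Type*} (G : SimpleGraph V) [DecidableRel G.Adj]
    (v : V) (S : Finset V) : ℕ :=
  (S.filter (fun u => G.Adj v u)).card

/-- The score of the partition `(A, B)`:
`T·(e_G(A) + e_G(B)) + c·(|{i ∈ A : y i = 1}| + |{j ∈ B : y j = -1}|)`. -/
noncomputable def score {V : Type*} [DecidableEq V] (G : SimpleGraph V) [DecidableRel G.Adj]
    (T c : ℝ) (y : V → ℝ) (A B : Finset V) : ℝ :=
  T * ((edgesWithin G A : ℝ) + (edgesWithin G B : ℝ))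
    + c * (((A.filter (fun i => y i = 1)).card : ℝ)
        + ((B.filter (fun j => y j = (-1 : ℝ))).card : ℝ))

section EdgeCounts

variable {V : Type*} [DecidableEq V] (G : SimpleGraph V) [DecidableRel G.Adj]

lemma edgesBetween_insert (u : V) {v : V} {S : Finset V} (hv : v ∉ S) :
    edgesBetween G u (insert v S) = edgesBetween G u S + if G.Adj u v then 1 else 0 := by
  simp only [edgesBetween, card_filter, sum_insert hv, add_comm]

lemma edgesBetween_erase_add (u : V) {v : V} {S : Finset V} (hv : v ∈ S) :
    edgesBetween G u (S.erase v) + (if G.Adj u v then 1 else 0) = edgesBetween G u S := by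
  rw [← edgesBetween_insert G u (notMem_erase v S), insert_erase hv]

lemma edgesWithin_insert {v : V} {S : Finset V} (hv : v ∉ S) :
    edgesWithin G (insert v S) = edgesWithin G S + edgesBetween G v S := by
  have card_pairs : #{p ∈ insert v S ×ˢ insert v S | G.Adj p.1 p.2} =
      #{p ∈ S ×ˢ S | G.Adj p.1 p.2} + edgesBetween G v S * 2 := by
    simp only [edgesBetween, card_filter, sum_product, sum_insert hv, sum_add_distrib,
      G.adj_comm _ v, SimpleGraph.irrefl, if_false]
    ring
  rw [edgesWithin, card_pairs, Nat.add_mul_div_right _ _ two_pos, edgesWithin]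

lemma edgesWithin_erase_add {v : V} {S : Finset V} (hv : v ∈ S) :
    edgesWithin G (S.erase v) + edgesBetween G v S = edgesWithin G S := by
  have no_loop : edgesBetween G v (S.erase v) = edgesBetween G v S := by
    simpa using edgesBetween_erase_add G v hv
  rw [← no_loop, ← edgesWithin_insert G (notMem_erase v S), insert_erase hv]

end EdgeCounts

section Score

variable {V : Type*} [DecidableEq V] (G : SimpleGraph V) [DecidableRel G.Adj]
  (T c : ℝ) (y : V → ℝ)

lemma score_neg_swap (A B : Finset V) : score G T c (-y) B A = score G T c y A B := by
  simp only [score, Pi.neg_apply, neg_eq_iff_eq_neg, neg_neg]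
  ring

variable {y} {A B : Finset V}

lemma score_erase_insert {v : V} (hvA : v ∈ A) (hvB : v ∉ B) (hy : y v = 1 ∨ y v = -1) :
    score G T c y (A.erase v) (insert v B) = score G T c y A B +
      (T * ((edgesBetween G v B : ℝ) - (edgesBetween G v A : ℝ)) - c * y v) := by
  have label_gain : (if y v = -1 then 1 else 0 : ℝ) - (if y v = 1 then 1 else 0) = -y v := by
    rcases hy with h | h <;> norm_num [h]
  have labels_A : (#{u ∈ A.erase v | y u = 1} : ℝ) + (if y v = 1 then 1 else 0) =
      #{u ∈ A | y u = 1} := by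
    simp only [natCast_card_filter, sum_erase_add _ _ hvA]
  have labels_B : (#{u ∈ insert v B | y u = -1} : ℝ) =
      (if y v = -1 then 1 else 0) + #{u ∈ B | y u = -1} := by
    simp only [natCast_card_filter, sum_insert hvB]
  simp only [score, labels_B, ← labels_A, edgesWithin_insert G hvB, ← edgesWithin_erase_add G hvA]
  push_cast
  linear_combination c * label_gain

lemma score_insert_erase {v : V} (hvA : v ∉ A) (hvB : v ∈ B) (hy : y v = 1 ∨ y v = -1) :
    score G T c y (insert v A) (B.erase v) = score G T c y A B +
      (T * ((edgesBetween G v A : ℝ) - (edgesBetween G v B : ℝ)) + c * y v) := by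
  have hy_neg : (-y) v = 1 ∨ (-y) v = -1 := by
    simpa only [Pi.neg_apply, neg_eq_iff_eq_neg, neg_neg] using hy.symm
  rw [← score_neg_swap, score_erase_insert G T c hvB hvA hy_neg, score_neg_swap,
    Pi.neg_apply, mul_neg, sub_neg_eq_add]

lemma score_swap (hdisj : Disjoint A B) {i j : V} (hi : i ∈ A) (hj : j ∈ B)
    (hyi : y i = 1 ∨ y i = -1) (hyj : y j = 1 ∨ y j = -1) :
    score G T c y (insert j (A.erase i)) (insert i (B.erase j)) = score G T c y A B +
      (T * ((edgesBetween G i B : ℝ) - (edgesBetween G i A : ℝ)) - c * y i) +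
      (T * ((edgesBetween G j A : ℝ) - (edgesBetween G j B : ℝ)) + c * y j) -
      2 * T * (if G.Adj j i then 1 else 0) := by
  have hiB : i ∉ B := disjoint_left.mp hdisj hi
  have hjA : j ∉ A.erase i := fun h => disjoint_right.mp hdisj hj (mem_of_mem_erase h)
  have hij : i ≠ j := fun h => hiB (h ▸ hj)
  rw [← erase_insert_of_ne hij, score_insert_erase G T c hjA (mem_insert_of_mem hj) hyj,
    score_erase_insert G T c hi hiB hyi, edgesBetween_insert G j hiB,
    ← edgesBetween_erase_add G j hi]
  push_cast
  ring

end Score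

theorem swap_increases_score_noisy_labels_general
    {V : Type*} [DecidableEq V]
    (G : SimpleGraph V) [DecidableRel G.Adj]
    (A B : Finset V) (hdisj : Disjoint A B)
    (T c : ℝ) (hT : 0 ≤ T)
    (y : V → ℝ) (hy : ∀ v, y v = 1 ∨ y v = -1)
    (i j : V) (hi : i ∈ A) (hj : j ∈ B)
    (h1 : T * ((edgesBetween G i B : ℝ) - (edgesBetween G i A : ℝ)) - c * y i ≥ T)
    (h2 : T * ((edgesBetween G j A : ℝ) - (edgesBetween G j B : ℝ)) + c * y j ≥ T) :
    score G T c y (insert j (A.erase i)) (insert i (B.erase j)) ≥ score G T c y A B := by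
  have correction_le : 2 * T * (if G.Adj j i then 1 else 0) ≤ 2 * T :=
    mul_le_of_le_one_right (by positivity) (by split_ifs <;> norm_num)
  rw [score_swap G T c hdisj hi hj (hy i) (hy j)]
  linarith

theorem swap_increases_score_noisy_labels
    {V : Type*} [Fintype V] [DecidableEq V]
    (G : SimpleGraph V) [DecidableRel G.Adj]
    (A B : Finset V) (hdisj : Disjoint A B) (hcover : A ∪ B = Finset.univ)
    (T c : ℝ) (hT : 0 ≤ T) (hc : 0 ≤ c)
    (y : V → ℝ) (hy : ∀ v, y v = 1 ∨ y v = -1)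
    (i j : V) (hi : i ∈ A) (hj : j ∈ B)
    (h1 : T * ((edgesBetween G i B : ℝ) - (edgesBetween G i A : ℝ)) - c * y i ≥ T)
    (h2 : T * ((edgesBetween G j A : ℝ) - (edgesBetween G j B : ℝ)) + c * y j ≥ T) :
    score G T c y (insert j (A.erase i)) (insert i (B.erase j))
      ≥ score G T c y A B :=
  swap_increases_score_noisy_labels_general G A B hdisj T c hT y hy i j hi hj h1 h2
end

section
/- Let V be a finite set, G a simple graph on V, and let A, B be disjoint sets with A ∪ B = V. Let T ≥ 0 be a real number, let f₊, f₋ : V → ℝ, and set h = f₊ − f₋. Define score(A,B) = T·(e_G(A) + e_G(B)) + Σ_{i ∈ A} f₊(i) + Σ_{j ∈ B} f₋(j). Suppose there exist i ∈ A and j ∈ B such that T·(e_G(i,B) − e_G(i,A)) − h(i) ≥ T and T·(e_G(j,A) − e_G(j,B)) + h(j) ≥ T. Then, with Â = (A \ {i}) ∪ {j} and B̂ = (B \ {j}) ∪ {i}, one has score(Â, B̂) ≥ score(A, B). -/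
open Finset

/-- The score of the partition `(A,B)` with general side-information log-likelihoods:
`T·(e_G(A)+e_G(B)) + Σ_{i ∈ A} f₊(i) + Σ_{j ∈ B} f₋(j)`. -/
def scoreGen {V : Type*} [DecidableEq V] (G : SimpleGraph V) [DecidableRel G.Adj]
    (T : ℝ) (fplus fminus : V → ℝ) (A B : Finset V) : ℝ :=
  T * ((edgesWithin G A : ℝ) + (edgesWithin G B : ℝ))
    + ∑ i ∈ A, fplus i + ∑ j ∈ B, fminus j

/-!
Moving `i` out of `A` and `j` into it changes `e_G(A)` by `e_G(j, A) - e_G(i, A)`, minus one when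
`i` and `j` are adjacent, since the edge `ij` is counted by `e_G(j, A)` but does not lie within
the new set; `B` behaves symmetrically. The score therefore grows by the sum of the left-hand sides
of the two assumed inequalities, less `2T` if `i` and `j` are adjacent. That sum is at least `2T`.
-/

section

variable {V : Type*} [DecidableEq V] (G : SimpleGraph V) [DecidableRel G.Adj]
  {A B : Finset V} {i j : V}

lemma edgesBetween_erase (v : V) (hi : i ∈ A) :
    edgesBetween G v (A.erase i) + (if G.Adj v i then 1 else 0) = edgesBetween G v A := by
  simp only [edgesBetween, card_filter]
  exact sum_erase_add A _ hi

lemma edgesBetween_erase_self (hi : i ∈ A) :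
    edgesBetween G i (A.erase i) = edgesBetween G i A := by
  simpa using edgesBetween_erase G i hi

lemma card_adj_pairs_insert (hi : i ∉ A) :
    #{p ∈ insert i A ×ˢ insert i A | G.Adj p.1 p.2} =
      #{p ∈ A ×ˢ A | G.Adj p.1 p.2} + 2 * edgesBetween G i A := by
  simp only [edgesBetween, card_filter, sum_product, sum_insert hi, sum_add_distrib,
    G.irrefl, if_false, G.adj_comm _ i]
  ring

lemma edgesWithin_insert_s2 (hi : i ∉ A) :
    edgesWithin G (insert i A) = edgesWithin G A + edgesBetween G i A := by
  rw [edgesWithin, card_adj_pairs_insert G hi, Nat.add_mul_div_left _ _ two_pos, edgesWithin]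

lemma edgesWithin_erase (hi : i ∈ A) :
    edgesWithin G (A.erase i) + edgesBetween G i A = edgesWithin G A := by
  rw [← edgesBetween_erase_self G hi, ← edgesWithin_insert_s2 G (notMem_erase i A),
    insert_erase hi]

lemma edgesWithin_insert_erase (hi : i ∈ A) (hj : j ∉ A) :
    edgesWithin G (insert j (A.erase i)) + edgesBetween G i A + (if G.Adj j i then 1 else 0) =
      edgesWithin G A + edgesBetween G j A := by
  have h_insert := edgesWithin_insert_s2 G (mt mem_of_mem_erase hj : j ∉ A.erase i)
  have h_erase := edgesWithin_erase G hi
  have h_between := edgesBetween_erase G j hi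
  lia

lemma sum_insert_erase_eq_sub_add {M : Type*} [AddCommGroup M] (f : V → M)
    (hi : i ∈ A) (hj : j ∉ A) :
    ∑ v ∈ insert j (A.erase i), f v = ∑ v ∈ A, f v - f i + f j := by
  rw [sum_insert (mt mem_of_mem_erase hj), sum_erase_eq_sub hi, add_comm]

lemma scoreGen_swap_sub_scoreGen (T : ℝ) (fplus fminus : V → ℝ)
    (hiA : i ∈ A) (hiB : i ∉ B) (hjA : j ∉ A) (hjB : j ∈ B) :
    scoreGen G T fplus fminus (insert j (A.erase i)) (insert i (B.erase j))
        - scoreGen G T fplus fminus A B =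
      (T * ((edgesBetween G i B : ℝ) - edgesBetween G i A) - (fplus i - fminus i))
        + (T * ((edgesBetween G j A : ℝ) - edgesBetween G j B) + (fplus j - fminus j))
        - 2 * T * (if G.Adj i j then 1 else 0) := by
  have edges_A : (edgesWithin G (insert j (A.erase i)) : ℝ) + edgesBetween G i A
      + (if G.Adj i j then 1 else 0) = edgesWithin G A + edgesBetween G j A := by
    simp only [G.adj_comm i j]
    exact_mod_cast edgesWithin_insert_erase G hiA hjA
  have edges_B : (edgesWithin G (insert i (B.erase j)) : ℝ) + edgesBetween G j B
      + (if G.Adj i j then 1 else 0) = edgesWithin G B + edgesBetween G i B := by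
    exact_mod_cast edgesWithin_insert_erase G hjB hiB
  rw [scoreGen, scoreGen, sum_insert_erase_eq_sub_add fplus hiA hjA,
    sum_insert_erase_eq_sub_add fminus hjB hiB]
  linear_combination T * (edges_A + edges_B)

theorem swap_increases_score_general_side_info_general
    (hiA : i ∈ A) (hiB : i ∉ B) (hjA : j ∉ A) (hjB : j ∈ B)
    {T : ℝ} (hT : 0 ≤ T) {fplus fminus h : V → ℝ} (hdef : h = fplus - fminus)
    (hgain : 2 * T ≤
      (T * ((edgesBetween G i B : ℝ) - edgesBetween G i A) - h i)
        + (T * ((edgesBetween G j A : ℝ) - edgesBetween G j B) + h j)) :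
    scoreGen G T fplus fminus A B ≤
      scoreGen G T fplus fminus (insert j (A.erase i)) (insert i (B.erase j)) := by
  have loss_le : 2 * T * (if G.Adj i j then 1 else 0) ≤ 2 * T :=
    mul_le_of_le_one_right (by positivity) (by split_ifs <;> norm_num)
  rw [← sub_nonneg, scoreGen_swap_sub_scoreGen G T fplus fminus hiA hiB hjA hjB]
  simp only [hdef, Pi.sub_apply] at hgain
  linarith

end

theorem swap_increases_score_general_side_info
    {V : Type*} [Fintype V] [DecidableEq V]
    (G : SimpleGraph V) [DecidableRel G.Adj]
    (A B : Finset V) (hdisj : Disjoint A B) (hcover : A ∪ B = Finset.univ)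
    (T : ℝ) (hT : 0 ≤ T)
    (fplus fminus : V → ℝ) (h : V → ℝ) (hdef : h = fplus - fminus)
    (i j : V) (hi : i ∈ A) (hj : j ∈ B)
    (h1 : T * ((edgesBetween G i B : ℝ) - (edgesBetween G i A : ℝ)) - h i ≥ T)
    (h2 : T * ((edgesBetween G j A : ℝ) - (edgesBetween G j B : ℝ)) + h j ≥ T) :
    scoreGen G T fplus fminus (insert j (A.erase i)) (insert i (B.erase j))
      ≥ scoreGen G T fplus fminus A B :=
  swap_increases_score_general_side_info_general G hi (disjoint_left.mp hdisj hi)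
    (disjoint_right.mp hdisj hj) hj hT hdef (by linarith)
end

section
/- Fix a real a > 0. For each integer n ≥ 3, let m = ⌈n/(log n)³⌉ and let (W_e), indexed by the two-element subsets e of {1,…,m}, be i.i.d. Bernoulli random variables with success probability min(1, a·log n/n). Let Δ_n be the event that for every i ∈ {1,…,m}, the sum Σ_{j ≤ m, j ≠ i} W_{{i,j}} is at most log n / log log n. Then P(Δ_n) → 1 as n → ∞. -/
/-!
A convexity bound on the moment generating function gives, for a sum `S` of independent
`[0, 1]`-valued variables and any `t ≥ 0`, `P(S ≥ K) ≤ exp (-t K + (eᵗ - 1) E S)`. With `L = log n`,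
a vertex has expected degree at most `⌈n / L³⌉ * (a L / n) ≤ 2 a / L²`. Taking `eᵗ = L²` makes
`(eᵗ - 1) E S` at most `2 a`, while `K = L / log L` makes `t K = 2 L`, so a given vertex exceeds
`K` with probability at most `e²ᵃ / n²`. There are at most `n` vertices, and the union bound leaves
`e²ᵃ / n → 0`.
-/

open MeasureTheory ProbabilityTheory Filter

/-- `⌈n / (log n)³⌉`. -/
noncomputable def mParam (n : ℕ) : ℕ := ⌈(n : ℝ) / (Real.log n) ^ 3⌉₊

/-- Index type for the two-element subsets of `Fin m`, encoded as ordered pairs. -/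
def EdgeIdx (m : ℕ) : Type := {p : Fin m × Fin m // p.1 < p.2}

instance (m : ℕ) : Fintype (EdgeIdx m) := by unfold EdgeIdx; infer_instance

/-- The degree of vertex `i`: the sum of `W` over the two-element subsets containing `i`. -/
noncomputable def degSum {m : ℕ} {Ω : Type*} (W : EdgeIdx m → Ω → ℝ) (i : Fin m) (ω : Ω) : ℝ :=
  ∑ e ∈ Finset.univ.filter (fun e : EdgeIdx m => e.1.1 = i ∨ e.1.2 = i), W e ω

section Probability

variable {Ω : Type*} [MeasurableSpace Ω] {μ : Measure Ω}

lemma exp_mul_le_one_add_mul_of_mem_Icc {x : ℝ} (hx : x ∈ Set.Icc 0 1) (t : ℝ) :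
    Real.exp (t * x) ≤ 1 + x * (Real.exp t - 1) := by
  have h := convexOn_exp.2 (Set.mem_univ 0) (Set.mem_univ t) (sub_nonneg.2 hx.2) hx.1
    (sub_add_cancel 1 x)
  simp only [smul_eq_mul, mul_zero, zero_add, Real.exp_zero, mul_one] at h
  rw [mul_comm t]
  linarith

lemma mgf_le_exp_integral_mul_of_mem_Icc [IsProbabilityMeasure μ] {X : Ω → ℝ}
    (hX : AEMeasurable X μ) (hX01 : ∀ᵐ ω ∂μ, X ω ∈ Set.Icc 0 1) (t : ℝ) :
    mgf X μ t ≤ Real.exp (μ[X] * (Real.exp t - 1)) := by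
  have hint : Integrable (fun ω => X ω * (Real.exp t - 1)) μ :=
    (Integrable.of_mem_Icc 0 1 hX hX01).mul_const _
  calc mgf X μ t
      ≤ ∫ ω, (1 + X ω * (Real.exp t - 1)) ∂μ :=
        integral_mono_ae (integrable_exp_mul_of_mem_Icc hX hX01) ((integrable_const 1).add hint)
          (hX01.mono fun _ hω => exp_mul_le_one_add_mul_of_mem_Icc hω t)
    _ = μ[X] * (Real.exp t - 1) + 1 := by
        rw [integral_add (integrable_const 1) hint, integral_mul_const, integral_const,
          probReal_univ, one_smul, add_comm]
    _ ≤ Real.exp (μ[X] * (Real.exp t - 1)) := Real.add_one_le_exp _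

lemma measureReal_sum_ge_le_exp_of_iIndepFun {ι : Type*} {X : ι → Ω → ℝ}
    (hindep : iIndepFun X μ) (hX : ∀ i, AEMeasurable (X i) μ)
    (hX01 : ∀ i, ∀ᵐ ω ∂μ, X i ω ∈ Set.Icc 0 1) (s : Finset ι) {t : ℝ} (ht : 0 ≤ t) (K : ℝ) :
    μ.real {ω | K ≤ ∑ i ∈ s, X i ω} ≤
      Real.exp (-t * K + (∑ i ∈ s, μ[X i]) * (Real.exp t - 1)) := by
  have := hindep.isProbabilityMeasure
  have hsum_le : ∀ᵐ ω ∂μ, (∑ i ∈ s, X i) ω ≤ s.card := by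
    filter_upwards [(Finset.eventually_all s).2 fun i _ => hX01 i] with ω hω
    simpa only [Finset.sum_apply, nsmul_eq_mul, mul_one] using
      Finset.sum_le_card_nsmul s _ 1 fun i hi => (hω i hi).2
  have hint := integrable_exp_mul_of_le t s.card ht (s.aemeasurable_sum fun i _ => hX i) hsum_le
  calc μ.real {ω | K ≤ ∑ i ∈ s, X i ω}
      ≤ Real.exp (-t * K) * mgf (∑ i ∈ s, X i) μ t := by
        simpa only [Finset.sum_apply] using measure_ge_le_exp_mul_mgf K ht hint
    _ = Real.exp (-t * K) * ∏ i ∈ s, mgf (X i) μ t := by rw [hindep.mgf_sum₀ hX]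
    _ ≤ Real.exp (-t * K) * ∏ i ∈ s, Real.exp (μ[X i] * (Real.exp t - 1)) := by
        gcongr with i
        · exact fun _ _ => mgf_nonneg
        · exact mgf_le_exp_integral_mul_of_mem_Icc (hX i) (hX01 i) t
    _ = Real.exp (-t * K + (∑ i ∈ s, μ[X i]) * (Real.exp t - 1)) := by
        rw [← Real.exp_sum, ← Real.exp_add, Finset.sum_mul]

lemma one_sub_sum_measureReal_compl_le_measureReal_iInter [IsProbabilityMeasure μ]
    {ι : Type*} [Fintype ι] (s : ι → Set Ω) :
    1 - ∑ i, μ.real (s i)ᶜ ≤ μ.real (⋂ i, s i) := by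
  have hcover : 1 ≤ μ.real (⋂ i, s i) + μ.real (⋂ i, s i)ᶜ := by
    simpa only [Set.union_compl_self, probReal_univ] using
      measureReal_union_le (μ := μ) (⋂ i, s i) (⋂ i, s i)ᶜ
  have hunion : μ.real (⋂ i, s i)ᶜ ≤ ∑ i, μ.real (s i)ᶜ := by
    simpa only [Set.compl_iInter] using measureReal_iUnion_fintype_le fun i => (s i)ᶜ
  linarith

lemma ae_eq_or_eq_of_measure_add_eq_one [IsProbabilityMeasure μ] {β : Type*} [MeasurableSpace β]
    [MeasurableSingletonClass β] {X : Ω → β} (hX : AEMeasurable X μ) {x y : β} (hxy : x ≠ y)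
    (h : μ {ω | X ω = x} + μ {ω | X ω = y} = 1) : ∀ᵐ ω ∂μ, X ω = x ∨ X ω = y := by
  have hnull (z : β) : NullMeasurableSet {ω | X ω = z} μ :=
    hX.nullMeasurable (measurableSet_singleton z)
  have hdisj : Disjoint {ω | X ω = x} {ω | X ω = y} :=
    Set.disjoint_left.2 fun _ hx hy => hxy (hx.symm.trans hy)
  refine (prob_compl_eq_zero_iff₀ ((hnull x).union (hnull y))).2 ?_
  rw [measure_union₀ (hnull y) hdisj.aedisjoint, h]

section Bernoulli

variable [IsProbabilityMeasure μ] {X : Ω → ℝ} {p : ENNReal}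

lemma ae_eq_zero_or_one_of_bernoulli (hX : AEMeasurable X μ)
    (h : μ {ω | X ω = 1} = p ∧ μ {ω | X ω = 0} = 1 - p) : ∀ᵐ ω ∂μ, X ω = 0 ∨ X ω = 1 := by
  refine ae_eq_or_eq_of_measure_add_eq_one hX zero_ne_one ?_
  rw [h.1, h.2, tsub_add_cancel_of_le (h.1 ▸ prob_le_one)]

lemma ae_mem_Icc_of_bernoulli (hX : AEMeasurable X μ)
    (h : μ {ω | X ω = 1} = p ∧ μ {ω | X ω = 0} = 1 - p) : ∀ᵐ ω ∂μ, X ω ∈ Set.Icc 0 1 := by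
  filter_upwards [ae_eq_zero_or_one_of_bernoulli hX h] with ω hω
  rcases hω with hω | hω <;> simp [hω]

lemma integral_eq_toReal_of_bernoulli (hX : AEMeasurable X μ)
    (h : μ {ω | X ω = 1} = p ∧ μ {ω | X ω = 0} = 1 - p) : μ[X] = p.toReal := by
  rw [integral_of_ae_eq_zero_or_one hX (ae_eq_zero_or_one_of_bernoulli hX h), measureReal_def, h.1]

end Bernoulli

end Probability

section Degree

variable {m : ℕ}

lemma card_filter_incident_le (i : Fin m) :
    (Finset.univ.filter fun e : EdgeIdx m => e.1.1 = i ∨ e.1.2 = i).card ≤ m := by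
  let otherEnd : EdgeIdx m → Fin m := fun e => if e.1.1 = i then e.1.2 else e.1.1
  have hinj : Set.InjOn otherEnd
      (Finset.univ.filter fun e : EdgeIdx m => e.1.1 = i ∨ e.1.2 = i) := by
    rintro ⟨⟨x, y⟩, hxy⟩ he ⟨⟨x', y'⟩, hxy'⟩ he' heq
    simp only [Finset.coe_filter, Finset.mem_univ, true_and] at he he'
    refine Subtype.ext (Prod.ext ?_ ?_) <;> grind
  simpa only [Finset.card_univ, Fintype.card_fin] using
    Finset.card_le_card_of_injOn otherEnd (fun e _ => Finset.mem_univ (otherEnd e)) hinj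

variable {Ω : Type*} [MeasurableSpace Ω] {μ : Measure Ω} {W : EdgeIdx m → Ω → ℝ} {p t : ℝ}

lemma measureReal_degSum_ge_le_exp (hindep : iIndepFun W μ) (hW : ∀ e, AEMeasurable (W e) μ)
    (hW01 : ∀ e, ∀ᵐ ω ∂μ, W e ω ∈ Set.Icc 0 1) (hp : 0 ≤ p) (hmean : ∀ e, μ[W e] ≤ p)
    (ht : 0 ≤ t) (K : ℝ) (i : Fin m) :
    μ.real {ω | K ≤ degSum W i ω} ≤ Real.exp (-t * K + m * p * (Real.exp t - 1)) := by
  refine (measureReal_sum_ge_le_exp_of_iIndepFun hindep hW hW01 _ ht K).trans ?_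
  have hexp : 0 ≤ Real.exp t - 1 := sub_nonneg.2 (Real.one_le_exp ht)
  gcongr
  calc ∑ e with e.1.1 = i ∨ e.1.2 = i, μ[W e]
      ≤ (Finset.univ.filter fun e : EdgeIdx m => e.1.1 = i ∨ e.1.2 = i).card * p := by
        simpa only [nsmul_eq_mul] using Finset.sum_le_card_nsmul _ _ p fun e _ => hmean e
    _ ≤ m * p := by gcongr; exact card_filter_incident_le i

lemma one_sub_mul_exp_le_measureReal_forall_degSum_le (hindep : iIndepFun W μ)
    (hW : ∀ e, AEMeasurable (W e) μ) (hW01 : ∀ e, ∀ᵐ ω ∂μ, W e ω ∈ Set.Icc 0 1) (hp : 0 ≤ p)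
    (hmean : ∀ e, μ[W e] ≤ p) (ht : 0 ≤ t) (K : ℝ) :
    1 - m * Real.exp (-t * K + m * p * (Real.exp t - 1)) ≤
      μ.real {ω | ∀ i, degSum W i ω ≤ K} := by
  have := hindep.isProbabilityMeasure
  have hvertex (i : Fin m) : μ.real {ω | degSum W i ω ≤ K}ᶜ ≤
      Real.exp (-t * K + m * p * (Real.exp t - 1)) := by
    have hsub : {ω | degSum W i ω ≤ K}ᶜ ⊆ {ω | K ≤ degSum W i ω} :=
      fun ω (hω : ¬degSum W i ω ≤ K) => (not_le.1 hω).le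
    exact (measureReal_mono hsub).trans
      (measureReal_degSum_ge_le_exp hindep hW hW01 hp hmean ht K i)
  calc 1 - m * Real.exp (-t * K + m * p * (Real.exp t - 1))
      ≤ 1 - ∑ i, μ.real {ω | degSum W i ω ≤ K}ᶜ := by
        gcongr
        simpa only [Finset.card_univ, Fintype.card_fin, nsmul_eq_mul] using
          Finset.sum_le_card_nsmul Finset.univ _ _ fun i _ => hvertex i
    _ ≤ μ.real (⋂ i, {ω | degSum W i ω ≤ K}) :=
        one_sub_sum_measureReal_compl_le_measureReal_iInter _
    _ = μ.real {ω | ∀ i, degSum W i ω ≤ K} := by rw [Set.ofPred_forall]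

end Degree

section Asymptotics

variable {n : ℕ}

lemma tendsto_log_natCast_atTop : Tendsto (fun n : ℕ => Real.log n) atTop atTop :=
  Real.tendsto_log_atTop.comp tendsto_natCast_atTop_atTop

lemma eventually_log_natCast_pow_le (k : ℕ) : ∀ᶠ n : ℕ in atTop, Real.log n ^ k ≤ n := by
  have hlittle : ∀ᶠ x : ℝ in atTop, ‖Real.log x ^ k‖ ≤ 1 * ‖x‖ :=
    Real.isLittleO_pow_log_id_atTop.bound one_pos
  filter_upwards [tendsto_natCast_atTop_atTop.eventually hlittle] with n hn
  rw [one_mul, Real.norm_natCast] at hn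
  exact (Real.le_norm_self _).trans hn

lemma mParam_le_self (hlog : 1 ≤ Real.log n) : mParam n ≤ n :=
  Nat.ceil_le.2 (div_le_self n.cast_nonneg (one_le_pow₀ hlog))

lemma mParam_mul_log_pow_three_le (hlog : 0 < Real.log n) :
    mParam n * Real.log n ^ 3 ≤ n + Real.log n ^ 3 := by
  calc mParam n * Real.log n ^ 3
      ≤ (n / Real.log n ^ 3 + 1) * Real.log n ^ 3 := by
        gcongr
        exact (Nat.ceil_lt_add_one (by positivity)).le
    _ = n + Real.log n ^ 3 := by field_simp

lemma mParam_mul_edgeMean_mul_log_sq_le {a : ℝ} (ha : 0 ≤ a) (hlog : 0 < Real.log n)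
    (hcube : Real.log n ^ 3 ≤ n) :
    mParam n * (a * Real.log n / n) * Real.log n ^ 2 ≤ 2 * a := by
  have hn : (0 : ℝ) < n := (pow_pos hlog 3).trans_le hcube
  calc mParam n * (a * Real.log n / n) * Real.log n ^ 2
      = a * (mParam n * Real.log n ^ 3) / n := by ring
    _ ≤ a * (n + n) / n := by
        gcongr
        exact (mParam_mul_log_pow_three_le hlog).trans (by gcongr)
    _ = 2 * a := by field_simp; ring

lemma exp_two_mul_log {x : ℝ} (hx : 0 < x) : Real.exp (2 * Real.log x) = x ^ 2 := by
  rw [← Nat.cast_ofNat, Real.exp_nat_mul, Real.exp_log hx]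

lemma mParam_mul_exp_le {a : ℝ} (ha : 0 ≤ a) (hlog : Real.exp 1 ≤ Real.log n)
    (hcube : Real.log n ^ 3 ≤ n) :
    mParam n * Real.exp (-(2 * Real.log (Real.log n)) * (Real.log n / Real.log (Real.log n)) +
        mParam n * (a * Real.log n / n) * (Real.exp (2 * Real.log (Real.log n)) - 1)) ≤
      Real.exp (2 * a) / n := by
  set L := Real.log n
  have hL_one : 1 ≤ L := (Real.one_le_exp zero_le_one).trans hlog
  have hL_pos : 0 < L := one_pos.trans_le hL_one
  have hn : (0 : ℝ) < n := (pow_pos hL_pos 3).trans_le hcube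
  have hloglog : 0 < Real.log L := one_pos.trans_le ((Real.le_log_iff_exp_le hL_pos).2 hlog)
  have hthreshold : -(2 * Real.log L) * (L / Real.log L) = -(2 * L) := by field_simp
  have hmean : mParam n * (a * L / n) * (L ^ 2 - 1) ≤ 2 * a := by
    refine le_trans ?_ (mParam_mul_edgeMean_mul_log_sq_le ha hL_pos hcube)
    gcongr
    exact sub_le_self _ zero_le_one
  rw [hthreshold, exp_two_mul_log hL_pos]
  calc mParam n * Real.exp (-(2 * L) + mParam n * (a * L / n) * (L ^ 2 - 1))
      ≤ n * Real.exp (-(2 * L) + 2 * a) := by gcongr; exact mParam_le_self hL_one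
    _ = Real.exp (2 * a) / n := by
        rw [Real.exp_add, Real.exp_neg, exp_two_mul_log hn]
        field_simp

end Asymptotics

theorem max_degree_bound_whp_general {a : ℝ} (ha : 0 ≤ a) {Ω : ℕ → Type*}
    [∀ n, MeasurableSpace (Ω n)] {P : ∀ n, Measure (Ω n)} {W : ∀ n, EdgeIdx (mParam n) → Ω n → ℝ}
    (hmeas : ∀ᶠ n in atTop, ∀ e, AEMeasurable (W n e) (P n))
    (hindep : ∀ᶠ n in atTop, iIndepFun (W n) (P n))
    (hW01 : ∀ᶠ n in atTop, ∀ e, ∀ᵐ ω ∂P n, W n e ω ∈ Set.Icc 0 1)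
    (hmean : ∀ᶠ n : ℕ in atTop, ∀ e, (P n)[W n e] ≤ a * Real.log n / n) :
    Tendsto (fun n => (P n).real {ω | ∀ i : Fin (mParam n),
        degSum (W n) i ω ≤ Real.log n / Real.log (Real.log n)})
      atTop (nhds 1) := by
  have hlim : Tendsto (fun n : ℕ => 1 - Real.exp (2 * a) / n) atTop (nhds 1) := by
    simpa only [sub_zero] using
      (tendsto_const_div_atTop_nhds_zero_nat (Real.exp (2 * a))).const_sub 1
  refine tendsto_of_tendsto_of_tendsto_of_le_of_le' hlim tendsto_const_nhds ?_ ?_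
  · filter_upwards [hmeas, hindep, hW01, hmean, eventually_log_natCast_pow_le 3,
      tendsto_log_natCast_atTop.eventually_ge_atTop (Real.exp 1)]
      with n hmeas hindep hW01 hmean hcube hlog
    have hL : 1 ≤ Real.log n := (Real.one_le_exp zero_le_one).trans hlog
    have ht : 0 ≤ 2 * Real.log (Real.log n) := mul_nonneg zero_le_two (Real.log_nonneg hL)
    exact (sub_le_sub_left (mParam_mul_exp_le ha hlog hcube) 1).trans
      (one_sub_mul_exp_le_measureReal_forall_degSum_le hindep hmeas hW01 (by positivity) hmean ht _)
  · filter_upwards [hindep] with n hindep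
    have := hindep.isProbabilityMeasure
    exact measureReal_le_one

theorem max_degree_bound_whp
    (a : ℝ) (ha : 0 < a)
    (Ω : ℕ → Type*) (mΩ : ∀ n, MeasurableSpace (Ω n))
    (P : ∀ n, Measure (Ω n)) (hP : ∀ n, IsProbabilityMeasure (P n))
    (W : ∀ n, EdgeIdx (mParam n) → Ω n → ℝ)
    (hmeas : ∀ n e, Measurable (W n e))
    (hindep : ∀ n, 3 ≤ n → iIndepFun (W n) (P n))
    (hbern : ∀ n, 3 ≤ n → ∀ e,
      P n {ω | W n e ω = 1} = ENNReal.ofReal (min 1 (a * Real.log n / n)) ∧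
      P n {ω | W n e ω = 0} = 1 - ENNReal.ofReal (min 1 (a * Real.log n / n))) :
    Tendsto (fun n => (P n {ω | ∀ i : Fin (mParam n),
        degSum (W n) i ω ≤ Real.log n / Real.log (Real.log n)}).toReal)
      atTop (nhds 1) := by
  have hmeas' n e : AEMeasurable (W n e) (P n) := (hmeas n e).aemeasurable
  refine max_degree_bound_whp_general ha.le (.of_forall hmeas') (eventually_atTop.2 ⟨3, hindep⟩)
    (eventually_atTop.2 ⟨3, fun n hn e => ae_mem_Icc_of_bernoulli (hmeas' n e) (hbern n hn e)⟩)
    (eventually_atTop.2 ⟨3, fun n hn e => ?_⟩)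
  rw [integral_eq_toReal_of_bernoulli (hmeas' n e) (hbern n hn e),
    ENNReal.toReal_ofReal (by positivity)]
  exact min_le_right _ _
end

section
/- Let X₁, …, X_n be i.i.d. real-valued random variables with common law that of X, and let t ∈ ℝ be such that M := E[e^{tX}] is finite, E[|X|·e^{tX}] is finite, and E[X²·e^{tX}] is finite. Set Γ = log M, a = E[X·e^{tX}]/M, and σ̂² = E[X²·e^{tX}]/M − a². Then for every ε > 0, P( (1/n)·Σ_{i=1}^n X_i ≥ a − ε ) ≥ e^{−n·(t·a − Γ + |t|·ε)} · (1 − σ̂²/(n·ε²)). -/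
/-!
Tilt the law of `X` by `exp (t * x)`: its mean becomes `a` and its variance `σ̂²`. A product measure
tilted by `exp (t * ∑ i, x i)` is the product of the tilted factors, so under the tilted measure the
sum `S` still has independent summands and Chebyshev's inequality gives
`|S - n * a| < n * ε` with probability at least `1 - σ̂² / (n * ε ^ 2)`. On that event the tilting
density `exp (t * S) / M ^ n` is at most `exp (n * (t * a + |t| * ε)) / M ^ n`, and dividing by this
bound transfers the estimate back to the original measure.
-/

open MeasureTheory ProbabilityTheory

section Tilting

variable {α : Type*} [MeasurableSpace α] {μ : Measure α} {f Y : α → ℝ}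

theorem tilted_apply_le [SFinite μ] {s : Set α} {c : ℝ} (hc : ∀ x ∈ s, f x ≤ c) :
    μ.tilted f s ≤ ENNReal.ofReal (Real.exp c / ∫ x, Real.exp (f x) ∂μ) * μ s := by
  rw [tilted_apply]
  calc ∫⁻ x in s, ENNReal.ofReal (Real.exp (f x) / ∫ y, Real.exp (f y) ∂μ) ∂μ
      ≤ ∫⁻ _ in s, ENNReal.ofReal (Real.exp c / ∫ y, Real.exp (f y) ∂μ) ∂μ := by
        refine setLIntegral_mono measurable_const fun x hx ↦ ?_
        gcongr
        exact hc x hx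
    _ = ENNReal.ofReal (Real.exp c / ∫ x, Real.exp (f x) ∂μ) * μ s := setLIntegral_const _ _

theorem exp_neg_mul_integral_exp_mul_measureReal_tilted_le [IsFiniteMeasure μ] {s : Set α} {c : ℝ}
    (hf : Integrable (fun x ↦ Real.exp (f x)) μ) (hc : ∀ x ∈ s, f x ≤ c) :
    Real.exp (-c) * (∫ x, Real.exp (f x) ∂μ) * (μ.tilted f).real s ≤ μ.real s := by
  rcases eq_zero_or_neZero μ with rfl | hμ
  · simp
  have hZ : 0 < ∫ x, Real.exp (f x) ∂μ := integral_exp_pos hf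
  have hle : (μ.tilted f).real s ≤ Real.exp c / (∫ x, Real.exp (f x) ∂μ) * μ.real s := by
    rw [← ENNReal.toReal_ofReal (by positivity : 0 ≤ Real.exp c / ∫ x, Real.exp (f x) ∂μ),
      measureReal_def, measureReal_def, ← ENNReal.toReal_mul]
    exact ENNReal.toReal_mono (by finiteness) (tilted_apply_le hc)
  calc Real.exp (-c) * (∫ x, Real.exp (f x) ∂μ) * (μ.tilted f).real s
      ≤ Real.exp (-c) * (∫ x, Real.exp (f x) ∂μ) *
          (Real.exp c / (∫ x, Real.exp (f x) ∂μ) * μ.real s) := by gcongr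
    _ = μ.real s := by rw [Real.exp_neg]; field_simp

theorem integral_tilted_eq_div (f Y : α → ℝ) :
    ∫ x, Y x ∂μ.tilted f = (∫ x, Y x * Real.exp (f x) ∂μ) / ∫ x, Real.exp (f x) ∂μ := by
  rw [integral_tilted, ← integral_div]
  congr with x
  rw [smul_eq_mul]
  ring

theorem memLp_two_tilted_iff (hY : AEMeasurable Y μ)
    (hf : Integrable (fun x ↦ Real.exp (f x)) μ) :
    MemLp Y 2 (μ.tilted f) ↔ Integrable (fun x ↦ Y x ^ 2 * Real.exp (f x)) μ := by
  rw [memLp_two_iff_integrable_sq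
    (hY.aestronglyMeasurable.mono_ac (tilted_absolutelyContinuous μ f)),
    integrable_tilted_iff hf]
  simp only [smul_eq_mul, mul_comm]

theorem variance_tilted [NeZero μ] (hf : Integrable (fun x ↦ Real.exp (f x)) μ)
    (hY : MemLp Y 2 (μ.tilted f)) :
    Var[Y; μ.tilted f] =
      (∫ x, Y x ^ 2 * Real.exp (f x) ∂μ) / (∫ x, Real.exp (f x) ∂μ)
        - ((∫ x, Y x * Real.exp (f x) ∂μ) / ∫ x, Real.exp (f x) ∂μ) ^ 2 := by
  have := isProbabilityMeasure_tilted hf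
  rw [variance_eq_sub hY, integral_tilted_eq_div, integral_tilted_eq_div]
  rfl

theorem one_sub_variance_div_sq_le_measureReal_abs_sub_lt [IsProbabilityMeasure μ]
    (hY : MemLp Y 2 μ) {δ : ℝ} (hδ : 0 < δ) :
    1 - Var[Y; μ] / δ ^ 2 ≤ μ.real {x | |Y x - μ[Y]| < δ} := by
  have hfar : μ.real {x | δ ≤ |Y x - μ[Y]|} ≤ Var[Y; μ] / δ ^ 2 :=
    ENNReal.toReal_le_of_le_ofReal (by positivity [variance_nonneg Y μ])
      (meas_ge_le_variance_div_sq hY hδ)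
  have hcover : {x | |Y x - μ[Y]| < δ} ∪ {x | δ ≤ |Y x - μ[Y]|} = Set.univ := by
    ext x
    simp [lt_or_ge]
  have hone := measureReal_union_le (μ := μ) {x | |Y x - μ[Y]| < δ} {x | δ ≤ |Y x - μ[Y]|}
  rw [hcover, probReal_univ] at hone
  linarith

theorem exp_cgf_sub_mul_le_measureReal_abs_sub_lt [IsFiniteMeasure μ] [NeZero μ] {t δ : ℝ}
    (hexp : Integrable (fun x ↦ Real.exp (t * Y x)) μ)
    (hY : MemLp Y 2 (μ.tilted (t * Y ·))) (hδ : 0 < δ) :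
    Real.exp (cgf Y μ t - t * (μ.tilted (t * Y ·))[Y] - |t| * δ)
        * (1 - Var[Y; μ.tilted (t * Y ·)] / δ ^ 2)
      ≤ μ.real {x | |Y x - (μ.tilted (t * Y ·))[Y]| < δ} := by
  set m := (μ.tilted (t * Y ·))[Y]
  have := isProbabilityMeasure_tilted hexp
  have htilt : ∀ x ∈ {x | |Y x - m| < δ}, t * Y x ≤ t * m + |t| * δ := by
    intro x (hx : |Y x - m| < δ)
    calc t * Y x = t * m + t * (Y x - m) := by ring
      _ ≤ t * m + |t| * |Y x - m| := by
        rw [← abs_mul]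
        gcongr
        exact le_abs_self _
      _ ≤ t * m + |t| * δ := by gcongr
  calc Real.exp (cgf Y μ t - t * m - |t| * δ) * (1 - Var[Y; μ.tilted (t * Y ·)] / δ ^ 2)
      ≤ Real.exp (cgf Y μ t - t * m - |t| * δ)
          * (μ.tilted (t * Y ·)).real {x | |Y x - m| < δ} := by
        gcongr
        exact one_sub_variance_div_sq_le_measureReal_abs_sub_lt hY hδ
    _ = Real.exp (-(t * m + |t| * δ)) * (∫ x, Real.exp (t * Y x) ∂μ)
          * (μ.tilted (t * Y ·)).real {x | |Y x - m| < δ} := by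
        rw [← mgf, ← exp_cgf hexp, ← Real.exp_add]
        ring_nf
    _ ≤ μ.real {x | |Y x - m| < δ} :=
        exp_neg_mul_integral_exp_mul_measureReal_tilted_le hexp htilt

end Tilting

section Product

variable {ι : Type*} [Fintype ι]

variable {α : ι → Type*} [∀ i, MeasurableSpace (α i)] {μ : ∀ i, Measure (α i)}

theorem tilted_sum_pi [∀ i, SigmaFinite (μ i)] (f : ∀ i, α i → ℝ) :
    (Measure.pi μ).tilted (fun x ↦ ∑ i, f i (x i)) = Measure.pi fun i ↦ (μ i).tilted (f i) := by
  refine (Measure.pi_eq fun s _ ↦ ?_).symm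
  simp only [tilted_apply_eq_ofReal_integral, integral_div, Real.exp_sum]
  rw [Measure.restrict_pi_pi,
    integral_fintype_prod_eq_prod fun i x ↦ Real.exp (f i x),
    integral_fintype_prod_eq_prod fun i x ↦ Real.exp (f i x), ← Finset.prod_div_distrib,
    ENNReal.ofReal_prod_of_nonneg fun i _ ↦ by positivity]

variable [∀ i, IsProbabilityMeasure (μ i)] {Y : ∀ i, α i → ℝ} {t δ : ℝ}

theorem integral_sum_comp_eval (hY : ∀ i, Integrable (Y i) (μ i)) :
    ∫ x, ∑ i, Y i (x i) ∂Measure.pi μ = ∑ i, (μ i)[Y i] := by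
  rw [integral_finsetSum Finset.univ fun i _ ↦ integrable_comp_eval (hY i)]
  exact Finset.sum_congr rfl fun i _ ↦ integral_comp_eval (hY i).aestronglyMeasurable

theorem cgf_sum_comp_eval (hexp : ∀ i, Integrable (fun x ↦ Real.exp (t * Y i x)) (μ i)) :
    cgf (fun x ↦ ∑ i, Y i (x i)) (Measure.pi μ) t = ∑ i, cgf (Y i) (μ i) t := by
  simp only [cgf, mgf, Finset.mul_sum, Real.exp_sum]
  rw [integral_fintype_prod_eq_prod fun i x ↦ Real.exp (t * Y i x),
    Real.log_prod fun i _ ↦ (integral_exp_pos (hexp i)).ne']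

theorem exp_sum_cgf_sub_mul_le_measureReal_pi_abs_sub_lt
    (hexp : ∀ i, Integrable (fun x ↦ Real.exp (t * Y i x)) (μ i))
    (hY : ∀ i, MemLp (Y i) 2 ((μ i).tilted (t * Y i ·))) (hδ : 0 < δ) :
    Real.exp (∑ i, cgf (Y i) (μ i) t - t * ∑ i, ((μ i).tilted (t * Y i ·))[Y i] - |t| * δ)
        * (1 - (∑ i, Var[Y i; (μ i).tilted (t * Y i ·)]) / δ ^ 2)
      ≤ (Measure.pi μ).real
          {x | |∑ i, Y i (x i) - ∑ i, ((μ i).tilted (t * Y i ·))[Y i]| < δ} := by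
  have hprob i : IsProbabilityMeasure ((μ i).tilted (t * Y i ·)) :=
    isProbabilityMeasure_tilted (hexp i)
  have htilt : (Measure.pi μ).tilted (fun x ↦ t * ∑ i, Y i (x i)) =
      Measure.pi fun i ↦ (μ i).tilted (t * Y i ·) := by
    simpa only [Finset.mul_sum] using tilted_sum_pi (μ := μ) fun i x ↦ t * Y i x
  have hmean : ((Measure.pi μ).tilted fun x ↦ t * ∑ i, Y i (x i))[fun x ↦ ∑ i, Y i (x i)] =
      ∑ i, ((μ i).tilted (t * Y i ·))[Y i] := by
    rw [htilt, integral_sum_comp_eval fun i ↦ (hY i).integrable one_le_two]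
  have hvar : Var[fun x ↦ ∑ i, Y i (x i); (Measure.pi μ).tilted fun x ↦ t * ∑ i, Y i (x i)] =
      ∑ i, Var[Y i; (μ i).tilted (t * Y i ·)] := by
    rw [htilt, ← variance_sum_pi hY, Finset.sum_fn]
  have hexp_sum : Integrable (fun x ↦ Real.exp (t * ∑ i, Y i (x i))) (Measure.pi μ) := by
    simpa only [Finset.mul_sum, Real.exp_sum] using Integrable.fintype_prod_dep hexp
  have hL2_sum : MemLp (fun x ↦ ∑ i, Y i (x i)) 2
      ((Measure.pi μ).tilted fun x ↦ t * ∑ i, Y i (x i)) := by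
    rw [htilt]
    exact memLp_finsetSum _ fun i _ ↦ (hY i).comp_measurePreserving (measurePreserving_eval _ i)
  simpa only [cgf_sum_comp_eval hexp, hmean, hvar]
    using exp_cgf_sub_mul_le_measureReal_abs_sub_lt hexp_sum hL2_sum hδ

end Product

theorem tilted_lower_bound_general {Ω ι : Type*} [MeasurableSpace Ω] [Fintype ι] [Nonempty ι]
    {P : Measure Ω} {μ : ι → Measure ℝ} {X : ι → Ω → ℝ}
    (hlaw : ∀ i, HasLaw (X i) (μ i) P) (hindep : iIndepFun X P) {t : ℝ}
    (hM : ∀ i, Integrable (fun x ↦ Real.exp (t * x)) (μ i))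
    (hM2 : ∀ i, Integrable (fun x ↦ x ^ 2 * Real.exp (t * x)) (μ i))
    {ε : ℝ} (hε : 0 < ε) :
    let n : ℝ := Fintype.card ι
    let M i : ℝ := ∫ x, Real.exp (t * x) ∂μ i
    let Γ i : ℝ := Real.log (M i)
    let a i : ℝ := (∫ x, x * Real.exp (t * x) ∂μ i) / M i
    let σ2 i : ℝ := (∫ x, x ^ 2 * Real.exp (t * x) ∂μ i) / M i - a i ^ 2
    Real.exp (-n * (t * ((∑ i, a i) / n) - (∑ i, Γ i) / n + |t| * ε))
        * (1 - (∑ i, σ2 i) / n / (n * ε ^ 2))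
      ≤ P.real {ω | (∑ i, a i) / n - ε ≤ (1 / n) * ∑ i, X i ω} := by
  intro n M Γ a σ2
  have := hindep.isProbabilityMeasure
  have hprob i : IsProbabilityMeasure (μ i) :=
    (hlaw i).map_eq ▸ Measure.isProbabilityMeasure_map (hlaw i).aemeasurable
  have hn : 0 < n := Nat.cast_pos.2 Fintype.card_pos
  have hcgf i : cgf id (μ i) t = Γ i := rfl
  have hL2 i : MemLp id 2 ((μ i).tilted (t * ·)) :=
    (memLp_two_tilted_iff aemeasurable_id (hM i)).2 (hM2 i)
  have hmean i : ∫ x, x ∂(μ i).tilted (t * ·) = a i := integral_tilted_eq_div _ _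
  have hvar i : Var[id; (μ i).tilted (t * ·)] = σ2 i := variance_tilted (hM i) (hL2 i)
  calc Real.exp (-n * (t * ((∑ i, a i) / n) - (∑ i, Γ i) / n + |t| * ε))
        * (1 - (∑ i, σ2 i) / n / (n * ε ^ 2))
      = Real.exp (∑ i, Γ i - t * ∑ i, a i - |t| * (n * ε))
        * (1 - (∑ i, σ2 i) / (n * ε) ^ 2) := by
        congr 2 <;> field_simp
        ring
    _ ≤ (Measure.pi μ).real {x | |∑ i, x i - ∑ i, a i| < n * ε} := by
        simpa only [id, hcgf, hmean, hvar] using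
          exp_sum_cgf_sub_mul_le_measureReal_pi_abs_sub_lt (Y := fun _ ↦ id) hM hL2
            (mul_pos hn hε)
    _ = P.real {ω | |∑ i, X i ω - ∑ i, a i| < n * ε} :=
        ((hindep.hasLaw_pi hlaw).measureReal_eq
          (measurableSet_lt (by fun_prop) (by fun_prop))).symm
    _ ≤ P.real {ω | (∑ i, a i) / n - ε ≤ (1 / n) * ∑ i, X i ω} := by
        refine measureReal_mono fun ω (hω : |∑ i, X i ω - ∑ i, a i| < n * ε) ↦ ?_
        have hlt : ∑ i, a i - n * ε < ∑ i, X i ω := by linarith [(abs_lt.1 hω).1]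
        calc (∑ i, a i) / n - ε = (1 / n) * (∑ i, a i - n * ε) := by field_simp
          _ ≤ (1 / n) * ∑ i, X i ω := by gcongr

theorem tilted_lower_bound
    {Ω : Type*} [MeasurableSpace Ω] (P : Measure Ω) [IsProbabilityMeasure P]
    (μ : Measure ℝ) [IsProbabilityMeasure μ]
    (n : ℕ) (hn : 0 < n)
    (X : Fin n → Ω → ℝ) (hmeas : ∀ i, Measurable (X i))
    (hindep : iIndepFun X P)
    (hlaw : ∀ i, Measure.map (X i) P = μ)
    (t : ℝ)
    (hM : Integrable (fun x => Real.exp (t * x)) μ)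
    (hM1 : Integrable (fun x => |x| * Real.exp (t * x)) μ)
    (hM2 : Integrable (fun x => x ^ 2 * Real.exp (t * x)) μ)
    (ε : ℝ) (hε : 0 < ε) :
    let M : ℝ := ∫ x, Real.exp (t * x) ∂μ
    let Γ : ℝ := Real.log M
    let a : ℝ := (∫ x, x * Real.exp (t * x) ∂μ) / M
    let σ2 : ℝ := (∫ x, x ^ 2 * Real.exp (t * x) ∂μ) / M - a ^ 2
    Real.exp (-(n : ℝ) * (t * a - Γ + |t| * ε)) * (1 - σ2 / ((n : ℝ) * ε ^ 2))
      ≤ (P {ω | a - ε ≤ (1 / (n : ℝ)) * ∑ i, X i ω}).toReal := by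
  have : Nonempty (Fin n) := ⟨⟨0, hn⟩⟩
  simpa [hn.ne', measureReal_def, -Finset.sum_sub_distrib] using tilted_lower_bound_general
    (fun i ↦ ⟨(hmeas i).aemeasurable, hlaw i⟩) hindep (fun _ ↦ hM) (fun _ ↦ hM2) hε
end

section
/- Let μ be a probability measure on ℝ and t ∈ ℝ such that M := ∫ e^{tx} dμ(x) is finite, and let μ_t be the exponentially tilted measure with density x ↦ e^{tx}/M with respect to μ. Let X₁, …, X_n be i.i.d. with law μ and X̂₁, …, X̂_n be i.i.d. with law μ_t. Then for every a ∈ ℝ and every ε > 0, P( a − ε ≤ (1/n)·Σ_{i=1}^n X_i ≤ a + ε ) ≥ e^{−n·(t·a − log M + |t|·ε)} · P( a − ε ≤ (1/n)·Σ_{i=1}^n X̂_i ≤ a + ε ). -/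
open MeasureTheory ProbabilityTheory

/-!
Tilting each factor of a product measure by `φ i` tilts the product by `∑ i, φ i (x i)`, so the
joint law of the tilted sample has density `∏ i, exp ⟪t, x i⟫ / M = exp (n ⟪t, x̄⟫ - n log M)` with
respect to the joint law of the original one, `x̄` being the empirical mean. On the event
`‖x̄ - a‖ ≤ ε` this density is at most `exp (n (⟪t, a⟫ - log M + ‖t‖ ε))`.
-/

lemma pi_tilted {ι : Type*} [Fintype ι] {α : ι → Type*} [∀ i, MeasurableSpace (α i)]
    (μ : ∀ i, Measure (α i)) [∀ i, SigmaFinite (μ i)] (φ : ∀ i, α i → ℝ) :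
    Measure.pi (fun i ↦ (μ i).tilted (φ i)) =
      (Measure.pi μ).tilted (fun x ↦ ∑ i, φ i (x i)) := by
  refine Measure.pi_eq fun s hs ↦ ?_
  have density_eq_prod (x : ∀ i, α i) :
      Real.exp (∑ i, φ i (x i)) / ∫ y, Real.exp (∑ i, φ i (y i)) ∂Measure.pi μ =
        ∏ i, Real.exp (φ i (x i)) / ∫ y, Real.exp (φ i y) ∂μ i := by
    simp only [Real.exp_sum, Finset.prod_div_distrib,
      integral_fintype_prod_eq_prod (fun i y ↦ Real.exp (φ i y))]
  simp only [tilted_apply_eq_ofReal_integral' _ (hs _),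
    tilted_apply_eq_ofReal_integral' _ (MeasurableSet.univ_pi hs), density_eq_prod,
    Measure.restrict_pi_pi, integral_fintype_prod_eq_prod
      (fun i y ↦ Real.exp (φ i y) / ∫ z, Real.exp (φ i z) ∂μ i)]
  exact ENNReal.ofReal_prod_of_nonneg fun i _ ↦ by positivity

lemma exp_neg_mul_measureReal_tilted_le {α : Type*} [MeasurableSpace α] {μ : Measure α}
    [IsFiniteMeasure μ] {φ : α → ℝ} (hφ : Integrable (fun x ↦ Real.exp (φ x)) μ) {s : Set α}
    {c : ℝ} (hs : ∀ x ∈ s, φ x - Real.log (∫ y, Real.exp (φ y) ∂μ) ≤ c) :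
    Real.exp (-c) * (μ.tilted φ).real s ≤ μ.real s := by
  obtain rfl | _ := eq_zero_or_neZero μ
  · simp
  have density_le (x : α) (hx : x ∈ s) :
      Real.exp (φ x) / ∫ y, Real.exp (φ y) ∂μ ≤ Real.exp c := by
    rw [← Real.exp_log (integral_exp_pos hφ), ← Real.exp_sub]
    exact Real.exp_le_exp.mpr (hs x hx)
  have tilted_le : μ.tilted φ s ≤ ENNReal.ofReal (Real.exp c) * μ s := by
    rw [tilted_apply, ← setLIntegral_const]
    exact setLIntegral_mono measurable_const fun x hx ↦ ENNReal.ofReal_le_ofReal (density_le x hx)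
  have tilted_real_le : (μ.tilted φ).real s ≤ Real.exp c * μ.real s := by
    simpa [measureReal_def, Real.exp_nonneg] using ENNReal.toReal_mono (by finiteness) tilted_le
  rwa [Real.exp_neg, inv_mul_le_iff₀ (Real.exp_pos c)]

section Dual

variable {ι E : Type*} [Fintype ι] [SeminormedAddCommGroup E] [NormedSpace ℝ E]

lemma dual_apply_le_of_mem_closedBall (t : StrongDual ℝ E) {a x : E} {ε : ℝ}
    (hx : x ∈ Metric.closedBall a ε) : t x ≤ t a + ‖t‖ * ε := by
  have : t (x - a) ≤ ‖t‖ * ε :=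
    (Real.le_norm_self _).trans (t.le_opNorm_of_le (mem_closedBall_iff_norm.mp hx))
  rwa [map_sub, sub_le_iff_le_add'] at this

lemma sum_dual_apply_le_of_mean_mem_closedBall [Nonempty ι] (t : StrongDual ℝ E) {a : E} {ε : ℝ}
    {x : ι → E} (hx : (Fintype.card ι : ℝ)⁻¹ • ∑ i, x i ∈ Metric.closedBall a ε) :
    ∑ i, t (x i) ≤ Fintype.card ι * (t a + ‖t‖ * ε) := by
  have h := dual_apply_le_of_mem_closedBall t hx
  rwa [map_smul, map_sum, smul_eq_mul, inv_mul_le_iff₀ (by simp [Fintype.card_pos])] at h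

end Dual

theorem change_of_measure_tilting_general
    {Ω₁ Ω₂ E : Type*} [MeasurableSpace Ω₁] [MeasurableSpace Ω₂]
    [SeminormedAddCommGroup E] [NormedSpace ℝ E] [MeasurableSpace E] [BorelSpace E]
    [SecondCountableTopology E]
    {P : Measure Ω₁} {Q : Measure Ω₂} {μ : Measure E} [IsProbabilityMeasure μ]
    {t : StrongDual ℝ E} (hM : Integrable (fun x ↦ Real.exp (t x)) μ)
    {n : ℕ} (hn : 0 < n) {X : Fin n → Ω₁ → E} {Xhat : Fin n → Ω₂ → E}
    (hXindep : iIndepFun X P) (hXhatindep : iIndepFun Xhat Q)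
    (hX : ∀ i, HasLaw (X i) μ P) (hXhat : ∀ i, HasLaw (Xhat i) (μ.tilted t) Q) (a : E) (ε : ℝ) :
    Real.exp (-(n : ℝ) * (t a - Real.log (∫ y, Real.exp (t y) ∂μ) + ‖t‖ * ε))
        * Q.real {ω | (n : ℝ)⁻¹ • ∑ i, Xhat i ω ∈ Metric.closedBall a ε}
      ≤ P.real {ω | (n : ℝ)⁻¹ • ∑ i, X i ω ∈ Metric.closedBall a ε} := by
  have : NeZero n := ⟨hn.ne'⟩
  have measurableSet_event :
      MeasurableSet {x : Fin n → E | (n : ℝ)⁻¹ • ∑ i, x i ∈ Metric.closedBall a ε} :=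
    measurableSet_preimage (by fun_prop) Metric.isClosed_closedBall.measurableSet
  have integrable_exp_sum :
      Integrable (fun x : Fin n → E ↦ Real.exp (∑ i, t (x i))) (Measure.pi fun _ ↦ μ) := by
    simpa only [Real.exp_sum] using Integrable.fintype_prod fun _ ↦ hM
  have log_integral_exp_sum :
      Real.log (∫ x : Fin n → E, Real.exp (∑ i, t (x i)) ∂Measure.pi fun _ ↦ μ) =
        n * Real.log (∫ y, Real.exp (t y) ∂μ) := by
    simp only [Real.exp_sum, integral_fintype_prod_eq_pow (fun y ↦ Real.exp (t y)),
      Fintype.card_fin, Real.log_pow]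
  rw [(hXindep.hasLaw_pi hX).measureReal_eq measurableSet_event,
    (hXhatindep.hasLaw_pi hXhat).measureReal_eq measurableSet_event, pi_tilted, neg_mul]
  refine exp_neg_mul_measureReal_tilted_le integrable_exp_sum fun x hx ↦ ?_
  have sum_le : ∑ i, t (x i) ≤ n * (t a + ‖t‖ * ε) := by
    simpa using sum_dual_apply_le_of_mean_mem_closedBall t (x := x) (by simpa using hx)
  rw [log_integral_exp_sum]
  linarith

theorem change_of_measure_tilting
    {Ω₁ Ω₂ : Type*} [MeasurableSpace Ω₁] [MeasurableSpace Ω₂]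
    (P : Measure Ω₁) [IsProbabilityMeasure P]
    (Q : Measure Ω₂) [IsProbabilityMeasure Q]
    (μ : Measure ℝ) [IsProbabilityMeasure μ]
    (t : ℝ)
    (hM : Integrable (fun x => Real.exp (t * x)) μ)
    (n : ℕ) (hn : 0 < n)
    (X : Fin n → Ω₁ → ℝ) (Xhat : Fin n → Ω₂ → ℝ)
    (hmX : ∀ i, Measurable (X i)) (hmXhat : ∀ i, Measurable (Xhat i))
    (hXindep : iIndepFun X P)
    (hXhatindep : iIndepFun Xhat Q)
    (hlawX : ∀ i, Measure.map (X i) P = μ)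
    (hlawXhat : ∀ i, Measure.map (Xhat i) Q =
      μ.withDensity (fun x =>
        ENNReal.ofReal (Real.exp (t * x) / ∫ y, Real.exp (t * y) ∂μ)))
    (a ε : ℝ) (hε : 0 < ε) :
    Real.exp (-(n : ℝ) * (t * a - Real.log (∫ y, Real.exp (t * y) ∂μ) + |t| * ε))
        * (Q {ω | a - ε ≤ (1 / (n : ℝ)) * ∑ i, Xhat i ω ∧
                  (1 / (n : ℝ)) * ∑ i, Xhat i ω ≤ a + ε}).toReal
      ≤ (P {ω | a - ε ≤ (1 / (n : ℝ)) * ∑ i, X i ω ∧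
                (1 / (n : ℝ)) * ∑ i, X i ω ≤ a + ε}).toReal := by
  simpa [Real.closedBall_eq_Icc, measureReal_def] using
    change_of_measure_tilting_general (t := ContinuousLinearMap.mul ℝ ℝ t) hM hn hXindep hXhatindep
      (fun i ↦ ⟨(hmX i).aemeasurable, hlawX i⟩) (fun i ↦ ⟨(hmXhat i).aemeasurable, hlawXhat i⟩) a ε
end

section
/- For reals a > b > 0 set T = log(a/b); for β ∈ ℝ set γ = √(β² + a·b·T²) and η(a,b,β) = a + b + β − 2γ/T + (β/T)·log((γ+β)/(γ−β)). Then for every β ∈ ℝ, the function g(t) = 2βt + a + b − b·e^{T·t} − a·e^{−T·t} attains its maximum over t ∈ ℝ at t* = (1/T)·log((γ+β)/(b·T)), and g(t*) = η(a,b,β). -/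
/-!
In the variable `u = T t` the objective is, up to the constant `a + b`,
`(p - q) u - b eᵘ - a e⁻ᵘ` with `p = (γ + β) / T` and `q = (γ - β) / T`, and the choice of `γ` means
precisely that `p q = a b`. Hence at `u₀ = log (p / b)` the two exponential terms equal `p` and `q`,
the derivative vanishes, and the inequality `x + 1 ≤ eˣ` at `x = ±(u - u₀)` makes `u₀` a global
maximum with value `(p - q) u₀ - p - q`. Finally `p q = a b` also gives
`2 u₀ = log (a / b) + log (p / q)`, whose first summand is `T` when `T = log (a / b)`.
-/

open Real Set

lemma abs_lt_sqrt_sq_add {d : ℝ} (hd : 0 < d) (x : ℝ) : |x| < √(x ^ 2 + d) :=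
  lt_sqrt_of_sq_lt (by rw [sq_abs]; exact lt_add_of_pos_right _ hd)

lemma sqrt_sq_add_add_mul_sqrt_sq_add_sub {d : ℝ} (hd : 0 ≤ d) (x : ℝ) :
    (√(x ^ 2 + d) + x) * (√(x ^ 2 + d) - x) = d := by
  linear_combination sq_sqrt (add_nonneg (sq_nonneg x) hd)

lemma add_add_sub_mul_le_mul_exp_add_mul_exp_neg {p q : ℝ} (hp : 0 ≤ p) (hq : 0 ≤ q) (x : ℝ) :
    p + q + (p - q) * x ≤ p * exp x + q * exp (-x) := calc
  p + q + (p - q) * x = p * (x + 1) + q * (-x + 1) := by ring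
  _ ≤ p * exp x + q * exp (-x) := by gcongr <;> exact add_one_le_exp _

section MulEqMul

variable {a b p q : ℝ}

lemma mul_exp_log_div (hb : 0 < b) (hp : 0 < p) : b * exp (log (p / b)) = p := by
  rw [exp_log (div_pos hp hb), mul_div_cancel₀ p hb.ne']

lemma mul_exp_neg_log_div_of_mul_eq_mul (hb : 0 < b) (hp : 0 < p) (hpq : p * q = a * b) :
    a * exp (-log (p / b)) = q := by
  rw [exp_neg, exp_log (div_pos hp hb), inv_div, ← mul_div_assoc, ← hpq,
    mul_div_cancel_left₀ q hp.ne']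

lemma two_mul_log_div_of_mul_eq_mul (hp : p ≠ 0) (hq : q ≠ 0) (hpq : p * q = a * b) :
    2 * log (p / b) = log (a / b) + log (p / q) := by
  obtain ⟨ha, hb⟩ : a ≠ 0 ∧ b ≠ 0 := mul_ne_zero_iff.1 (hpq ▸ mul_ne_zero hp hq)
  have log_add_log : log p + log q = log a + log b := by
    rw [← log_mul hp hq, hpq, log_mul ha hb]
  rw [log_div hp hb, log_div ha hb, log_div hp hq]
  linear_combination log_add_log

lemma isMaxOn_sub_mul_sub_mul_exp_sub_mul_exp_neg (hb : 0 < b) (hp : 0 < p) (hq : 0 ≤ q)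
    (hpq : p * q = a * b) :
    IsMaxOn (fun u ↦ (p - q) * u - b * exp u - a * exp (-u)) univ (log (p / b)) := by
  intro u _
  set u₀ := log (p / b)
  have hb_exp : b * exp u₀ = p := mul_exp_log_div hb hp
  have ha_exp : a * exp (-u₀) = q := mul_exp_neg_log_div_of_mul_eq_mul hb hp hpq
  have hb_shift : b * exp u = p * exp (u - u₀) := by
    rw [← hb_exp, mul_assoc, ← exp_add, add_sub_cancel]
  have ha_shift : a * exp (-u) = q * exp (-(u - u₀)) := by
    rw [← ha_exp, mul_assoc, ← exp_add]
    ring_nf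
  change (p - q) * u - b * exp u - a * exp (-u) ≤ (p - q) * u₀ - b * exp u₀ - a * exp (-u₀)
  rw [hb_shift, ha_shift, hb_exp, ha_exp]
  linarith [add_add_sub_mul_le_mul_exp_add_mul_exp_neg hp.le hq (u - u₀)]

end MulEqMul

theorem sup_eval_eta_general {a b T : ℝ} (ha : 0 < a) (hb : 0 < b) (hT : 0 < T) (β : ℝ) :
    let γ : ℝ := √(β ^ 2 + a * b * T ^ 2)
    let η : ℝ := a + b + β / T * log (a / b) - 2 * γ / T + β / T * log ((γ + β) / (γ - β))
    let g : ℝ → ℝ := fun t ↦ 2 * β * t + a + b - b * exp (T * t) - a * exp (-(T * t))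
    let tstar : ℝ := 1 / T * log ((γ + β) / (b * T))
    (∀ t : ℝ, g t ≤ g tstar) ∧ g tstar = η := by
  intro γ η g tstar
  have hd : 0 < a * b * T ^ 2 := by positivity
  obtain ⟨hγ_neg, hγ_pos⟩ := abs_lt.1 (abs_lt_sqrt_sq_add hd β)
  set p := (γ + β) / T with hp_def
  set q := (γ - β) / T
  have hp : 0 < p := div_pos (neg_lt_iff_pos_add'.1 hγ_neg) hT
  have hq : 0 < q := div_pos (sub_pos.2 hγ_pos) hT
  have hpq : p * q = a * b := by
    rw [div_mul_div_comm, sqrt_sq_add_add_mul_sqrt_sq_add_sub hd.le, ← sq,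
      mul_div_cancel_right₀ _ (pow_pos hT 2).ne']
  have hsub : p - q = 2 * β / T := by ring
  have hg (t : ℝ) : g t = (p - q) * (T * t) - b * exp (T * t) - a * exp (-(T * t)) + (a + b) := by
    simp only [g, hsub]
    field_simp
    ring
  have htstar : T * tstar = log (p / b) := by
    rw [← mul_assoc, mul_one_div_cancel hT.ne', one_mul, hp_def, div_div, mul_comm T b]
  refine ⟨fun t ↦ ?_, ?_⟩
  · rw [hg, hg, htstar]
    gcongr ?_ + _
    exact isMaxOn_sub_mul_sub_mul_exp_sub_mul_exp_neg hb hp hq.le hpq (mem_univ (T * t))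
  · have hlog : 2 * log (p / b) = log (a / b) + log ((γ + β) / (γ - β)) := by
      rw [two_mul_log_div_of_mul_eq_mul hp.ne' hq.ne' hpq,
        div_div_div_cancel_right₀ hT.ne']
    rw [hg, htstar, mul_exp_log_div hb hp, mul_exp_neg_log_div_of_mul_eq_mul hb hp hpq, hsub]
    linear_combination β / T * hlog

theorem sup_eval_eta (a b : ℝ) (hb : 0 < b) (hab : b < a) (β : ℝ) :
    let T : ℝ := Real.log (a / b)
    let γ : ℝ := Real.sqrt (β ^ 2 + a * b * T ^ 2)
    let η : ℝ := a + b + β - 2 * γ / T + (β / T) * Real.log ((γ + β) / (γ - β))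
    let g : ℝ → ℝ := fun t => 2 * β * t + a + b - b * Real.exp (T * t) - a * Real.exp (-(T * t))
    let tstar : ℝ := (1 / T) * Real.log ((γ + β) / (b * T))
    (∀ t : ℝ, g t ≤ g tstar) ∧ g tstar = η := by
  have hT : 0 < log (a / b) := log_pos ((one_lt_div hb).2 hab)
  simpa only [div_mul_cancel₀ β hT.ne'] using sup_eval_eta_general (hb.trans hab) hb hT β
end

section
/- For reals a > b > 0 set T = log(a/b); for β > 0 set γ = √(β² + a·b·T²) and η(a,b,β) = a + b + β − 2γ/T + (β/T)·log((γ+β)/(γ−β)). Then β > 1 implies η(a,b,β) > 2. -/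
/-!
Put `x = a * T`, `y = b * T`, `p = γ + β` and `q = γ - β`, so that `p * q = x * y` and
`log (x / y) = T`. The bound `log t ≤ t - 1` gives `p + p * log (x / p) ≤ x` and
`q + q * log (y / q) ≤ y`, where the two logarithms are opposite because `p * q = x * y`. Adding the
two bounds gives `2 * γ + β * (T - log ((γ + β) / (γ - β))) ≤ (a + b) * T`, and division by `T`
turns this into `2 * β ≤ η`.
-/

theorem add_mul_log_div_le {p x : ℝ} (hp : 0 < p) (hx : 0 < x) :
    p + p * Real.log (x / p) ≤ x :=
  calc
    p + p * Real.log (x / p) ≤ p + p * (x / p - 1) := by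
      gcongr
      exact Real.log_le_sub_one_of_pos (div_pos hx hp)
    _ = x := by field_simp; ring

theorem add_add_mul_log_div_sub_log_div_le {p q x y : ℝ}
    (hp : 0 < p) (hq : 0 < q) (hx : 0 < x) (hy : 0 < y) (h : p * q = x * y) :
    p + q + (p - q) / 2 * (Real.log (x / y) - Real.log (p / q)) ≤ x + y := by
  have log_opposite : Real.log (y / q) = -Real.log (x / p) := by
    rw [← Real.log_inv, inv_div]
    congr 1
    rw [div_eq_div_iff hq.ne' hx.ne']
    linarith
  have log_difference :
      Real.log (x / y) - Real.log (p / q) = Real.log (x / p) - Real.log (y / q) := by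
    rw [Real.log_div hx.ne' hy.ne', Real.log_div hp.ne' hq.ne', Real.log_div hx.ne' hp.ne',
      Real.log_div hy.ne' hq.ne']
    ring
  calc
    p + q + (p - q) / 2 * (Real.log (x / y) - Real.log (p / q))
        = (p + p * Real.log (x / p)) + (q + q * Real.log (y / q)) := by
      rw [log_difference, log_opposite]
      ring
    _ ≤ x + y := add_le_add (add_mul_log_div_le hp hx) (add_mul_log_div_le hq hy)

theorem eta_gt_two_of_beta_gt_one_general (a b : ℝ) (hb : 0 < b) (hab : b < a) (β : ℝ) :
    let T : ℝ := Real.log (a / b)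
    let γ : ℝ := Real.sqrt (β ^ 2 + a * b * T ^ 2)
    let η : ℝ := a + b + β - 2 * γ / T + (β / T) * Real.log ((γ + β) / (γ - β))
    2 * β ≤ η := by
  intro T γ η
  have ha : 0 < a := hb.trans hab
  have hT : 0 < T := Real.log_pos ((one_lt_div hb).2 hab)
  have sq_lt_radicand : β ^ 2 < β ^ 2 + a * b * T ^ 2 :=
    lt_add_of_pos_right _ (by positivity)
  obtain ⟨neg_γ_lt_β, β_lt_γ⟩ := Real.sq_lt.1 sq_lt_radicand
  have γ_sq : γ ^ 2 = β ^ 2 + a * b * T ^ 2 := Real.sq_sqrt (by positivity)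
  have product_eq : (γ + β) * (γ - β) = a * T * (b * T) := by linear_combination γ_sq
  have log_ratio : Real.log (a * T / (b * T)) = T := by rw [mul_div_mul_right _ _ hT.ne']
  have bound := add_add_mul_log_div_sub_log_div_le
    (neg_lt_iff_pos_add'.1 neg_γ_lt_β) (sub_pos.2 β_lt_γ) (mul_pos ha hT) (mul_pos hb hT) product_eq
  rw [log_ratio] at bound
  have η_mul_T : η * T =
      (a + b + β) * T - 2 * γ + β * Real.log ((γ + β) / (γ - β)) := by
    simp only [η]
    field_simp
  refine le_of_mul_le_mul_right ?_ hT
  linarith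

theorem eta_gt_two_of_beta_gt_one (a b : ℝ) (hb : 0 < b) (hab : b < a)
    (β : ℝ) (hβ : 0 < β) (hβ1 : 1 < β) :
    let T : ℝ := Real.log (a / b)
    let γ : ℝ := Real.sqrt (β ^ 2 + a * b * T ^ 2)
    let η : ℝ := a + b + β - 2 * γ / T + (β / T) * Real.log ((γ + β) / (γ - β))
    2 < η :=
  lt_of_lt_of_le (by linarith) (eta_gt_two_of_beta_gt_one_general a b hb hab β)
end

section
/- For reals a > b > 0 set T = log(a/b); for β > 0 set γ = √(β² + a·b·T²) and η(a,b,β) = a + b + β − 2γ/T + (β/T)·log((γ+β)/(γ−β)). Then for every β > 0, η(a,b,β) ≥ 2β. -/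
/-!
For `p, q, x, y > 0`, Gibbs' inequality reads `p + q - (x + y) ≤ p log (p / x) + q log (q / y)`.
When `p q = x y` the two logarithms are opposite, so the right-hand side collapses to
`(p - q) / 2 * (log (p / q) - log (x / y))`. Taking `p, q = γ ± β`, `x = a T` and `y = b T`, where
`log (x / y) = T`, gives `T * (η - 2 β) ≥ 0`.
-/

open Real

theorem sub_le_mul_log_div {p x : ℝ} (hp : 0 ≤ p) (hx : 0 < x) : p - x ≤ p * log (p / x) := by
  have hkl : 0 ≤ x * InformationTheory.klFun (p / x) :=
    mul_nonneg hx.le (InformationTheory.klFun_nonneg (div_nonneg hp hx.le))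
  have hkl_eq : x * InformationTheory.klFun (p / x) = p * log (p / x) + x - p := by
    rw [InformationTheory.klFun_apply]
    field_simp
  linarith

theorem add_add_mul_log_sub_log_le_add {p q x y : ℝ} (hp : 0 < p) (hq : 0 < q) (hx : 0 < x)
    (hy : 0 < y) (h : p * q = x * y) :
    p + q + (p - q) / 2 * (log (x / y) - log (p / q)) ≤ x + y := by
  have hlog : log p + log q = log x + log y := by
    rw [← log_mul hp.ne' hq.ne', h, log_mul hx.ne' hy.ne']
  have hpx : log (p / x) = (log (p / q) - log (x / y)) / 2 := by
    rw [log_div hp.ne' hx.ne', log_div hp.ne' hq.ne', log_div hx.ne' hy.ne']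
    linarith
  have hqy : log (q / y) = -((log (p / q) - log (x / y)) / 2) := by
    rw [log_div hq.ne' hy.ne', log_div hp.ne' hq.ne', log_div hx.ne' hy.ne']
    linarith
  have gibbs_p := sub_le_mul_log_div hp.le hx
  have gibbs_q := sub_le_mul_log_div hq.le hy
  rw [hpx] at gibbs_p
  rw [hqy] at gibbs_q
  linarith

theorem two_mul_sqrt_add_mul_log_sub_log_le_add {x y : ℝ} (hx : 0 < x) (hy : 0 < y) (β : ℝ) :
    2 * √(β ^ 2 + x * y) +
        β * (log (x / y) - log ((√(β ^ 2 + x * y) + β) / (√(β ^ 2 + x * y) - β))) ≤ x + y := by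
  have hxy : 0 < x * y := mul_pos hx hy
  have hsq : √(β ^ 2 + x * y) ^ 2 = β ^ 2 + x * y := sq_sqrt (by positivity)
  have habs : |β| < √(β ^ 2 + x * y) := lt_sqrt_of_sq_lt (by rw [sq_abs]; linarith)
  obtain ⟨hneg, hpos⟩ := abs_lt.mp habs
  have key := add_add_mul_log_sub_log_le_add (p := √(β ^ 2 + x * y) + β)
    (q := √(β ^ 2 + x * y) - β) (by linarith) (by linarith) hx hy (by linear_combination hsq)
  convert key using 1
  ring

theorem eta_ge_two_beta_general (a b : ℝ) (hb : 0 < b) (hab : b < a) (β : ℝ) :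
    let T : ℝ := Real.log (a / b)
    let γ : ℝ := Real.sqrt (β ^ 2 + a * b * T ^ 2)
    let η : ℝ := a + b + β - 2 * γ / T + (β / T) * Real.log ((γ + β) / (γ - β))
    2 * β ≤ η := by
  intro T γ η
  have hT : 0 < T := log_pos ((one_lt_div hb).2 hab)
  have hscaled : 2 * γ + β * (T - log ((γ + β) / (γ - β))) ≤ a * T + b * T := by
    have h := two_mul_sqrt_add_mul_log_sub_log_le_add
      (mul_pos (hb.trans hab) hT) (mul_pos hb hT) β
    rwa [mul_div_mul_right a b hT.ne', mul_mul_mul_comm, ← sq] at h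
  have hη : η - 2 * β =
      (a * T + b * T - (2 * γ + β * (T - log ((γ + β) / (γ - β))))) / T := by
    simp only [η]
    field_simp
    ring
  rw [← sub_nonneg, hη]
  exact div_nonneg (sub_nonneg.2 hscaled) hT.le

theorem eta_ge_two_beta (a b : ℝ) (hb : 0 < b) (hab : b < a)
    (β : ℝ) (hβ : 0 < β) :
    let T : ℝ := Real.log (a / b)
    let γ : ℝ := Real.sqrt (β ^ 2 + a * b * T ^ 2)
    let η : ℝ := a + b + β - 2 * γ / T + (β / T) * Real.log ((γ + β) / (γ - β))
    2 * β ≤ η :=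
  eta_ge_two_beta_general a b hb hab β
end

section
/- For reals a > b > 0 set T = log(a/b); for β > 0 set γ(β) = √(β² + a·b·T²) and η(a,b,β) = a + b + β − 2γ(β)/T + (β/T)·log((γ(β)+β)/(γ(β)−β)). Let β* = T·(a−b)/2. Then γ(β*) = T·(a+b)/2, (γ(β*)+β*)/(γ(β*)−β*) = a/b, and η(a,b,β*) = T·(a−b) = 2β*. -/
/-!
The critical parameter `β* = (T a - T b) / 2` is half the difference of `T a` and `T b`, and the
constant `a b T²` is their product. Since `((s - t) / 2)² + s t = ((s + t) / 2)²`, the root `γ(β*)`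
is half their sum, so `γ(β*) + β* = T a` and `γ(β*) - β* = T b`. The logarithm in `η(β*)` is
therefore `log (a / b)`, which cancels the denominator `T` for the actual choice `T = log (a / b)`.
-/

/-- The square root `γ(β)` occurring in the side-information exponent. The log-ratio
`T = log (a / b)` of the paper is kept as a free parameter, here and in the next two definitions. -/
noncomputable def sideInfoRoot (a b T β : ℝ) : ℝ :=
  Real.sqrt (β ^ 2 + a * b * T ^ 2)

/-- The exponent `η(a, b, β)` governing exact recovery with noisy label side information. -/
noncomputable def sideInfoExponent (a b T β : ℝ) : ℝ :=
  a + b + β - 2 * sideInfoRoot a b T β / T +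
    (β / T) * Real.log ((sideInfoRoot a b T β + β) / (sideInfoRoot a b T β - β))

/-- The parameter `β*` at the boundary between the two regimes of the exact recovery threshold. -/
noncomputable def criticalBeta (a b T : ℝ) : ℝ :=
  T * (a - b) / 2

section CriticalBeta

variable {a b T : ℝ}

theorem sideInfoRoot_criticalBeta (h : 0 ≤ T * (a + b)) :
    sideInfoRoot a b T (criticalBeta a b T) = T * (a + b) / 2 := by
  have complete_square :
      criticalBeta a b T ^ 2 + a * b * T ^ 2 = (T * (a + b) / 2) ^ 2 := by
    rw [criticalBeta]
    ring
  rw [sideInfoRoot, complete_square, Real.sqrt_sq (div_nonneg h zero_le_two)]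

theorem sideInfoRoot_add_criticalBeta (h : 0 ≤ T * (a + b)) :
    sideInfoRoot a b T (criticalBeta a b T) + criticalBeta a b T = T * a := by
  rw [sideInfoRoot_criticalBeta h, criticalBeta]
  ring

theorem sideInfoRoot_sub_criticalBeta (h : 0 ≤ T * (a + b)) :
    sideInfoRoot a b T (criticalBeta a b T) - criticalBeta a b T = T * b := by
  rw [sideInfoRoot_criticalBeta h, criticalBeta]
  ring

theorem sideInfoRoot_ratio_criticalBeta (hT : T ≠ 0) (h : 0 ≤ T * (a + b)) :
    (sideInfoRoot a b T (criticalBeta a b T) + criticalBeta a b T) /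
      (sideInfoRoot a b T (criticalBeta a b T) - criticalBeta a b T) = a / b := by
  rw [sideInfoRoot_add_criticalBeta h, sideInfoRoot_sub_criticalBeta h, mul_div_mul_left a b hT]

theorem sideInfoExponent_criticalBeta (hT : T ≠ 0) (h : 0 ≤ T * (a + b)) :
    sideInfoExponent a b T (criticalBeta a b T) = (a - b) / 2 * (T + Real.log (a / b)) := by
  rw [sideInfoExponent, sideInfoRoot_ratio_criticalBeta hT h, sideInfoRoot_criticalBeta h,
    criticalBeta]
  field_simp
  ring

end CriticalBeta

theorem eta_at_critical_beta (a b : ℝ) (hb : 0 < b) (hab : b < a) :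
    let T : ℝ := Real.log (a / b)
    let γ : ℝ → ℝ := fun β => Real.sqrt (β ^ 2 + a * b * T ^ 2)
    let η : ℝ → ℝ := fun β =>
      a + b + β - 2 * γ β / T + (β / T) * Real.log ((γ β + β) / (γ β - β))
    let βstar : ℝ := T * (a - b) / 2
    γ βstar = T * (a + b) / 2 ∧
    (γ βstar + βstar) / (γ βstar - βstar) = a / b ∧
    η βstar = T * (a - b) ∧
    η βstar = 2 * βstar := by
  intro T γ η βstar
  have T_pos : 0 < T := Real.log_pos ((one_lt_div hb).2 hab)
  have h_sum : 0 ≤ T * (a + b) := mul_nonneg T_pos.le (add_pos (hb.trans hab) hb).le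
  have η_eq : η βstar = T * (a - b) := calc
    η βstar = (a - b) / 2 * (T + T) := sideInfoExponent_criticalBeta T_pos.ne' h_sum
    _ = T * (a - b) := by ring
  have two_βstar : 2 * βstar = T * (a - b) := mul_div_cancel₀ _ two_ne_zero
  exact ⟨sideInfoRoot_criticalBeta h_sum, sideInfoRoot_ratio_criticalBeta T_pos.ne' h_sum,
    η_eq, η_eq.trans two_βstar.symm⟩
end
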